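/- arXiv:2008.00726 — 6 statements merged into one kernel-verified Lean document; each statement's English description precedes it below -/
import Mathlib

section
/- If φ₀ < 0 satisfies (1/N)·Σ_{m=1}^{M̄} K_m·γ_m/(γ_m − φ₀) = 1, then |φ₀| ≥ |K/N − 1| / ((1/N)·Σ_{m=1}^{M̄} K_m/γ_m), where K = Σ_{m=1}^{M̄} K_m. -/
open scoped BigOperators

/-!
Subtracting the defining equation from `K / N` and using `1 - γ / (γ - φ₀) = -φ₀ / (γ - φ₀)` gives
`K / N - 1 = -φ₀ * (1 / N) * ∑ m, K m / (γ m - φ₀)`. A negative `φ₀` only pushes `γ m - φ₀` further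
from zero than `γ m`, so the last sum is at most `∑ m, K m / γ m`.
-/

section

variable {ι 𝕜 : Type*} {s : Finset ι}

lemma sum_sub_sum_mul_div_sub [Field 𝕜] {γ : ι → 𝕜} {φ : 𝕜} (K : ι → 𝕜)
    (hφ : ∀ m ∈ s, γ m ≠ φ) :
    ∑ m ∈ s, K m - ∑ m ∈ s, K m * γ m / (γ m - φ) = -φ * ∑ m ∈ s, K m / (γ m - φ) := by
  rw [← Finset.sum_sub_distrib, Finset.mul_sum]
  refine Finset.sum_congr rfl fun m hm => ?_
  have hne : γ m - φ ≠ 0 := sub_ne_zero.mpr (hφ m hm)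
  field_simp
  ring

lemma norm_sum_div_le_sum_norm_div_norm [NormedDivisionRing 𝕜] {γ δ : ι → 𝕜} (K : ι → 𝕜)
    (hγ : ∀ m ∈ s, γ m ≠ 0) (hγδ : ∀ m ∈ s, ‖γ m‖ ≤ ‖δ m‖) :
    ‖∑ m ∈ s, K m / δ m‖ ≤ ∑ m ∈ s, ‖K m‖ / ‖γ m‖ := by
  refine norm_sum_le_of_le s fun m hm => ?_
  rw [norm_div]
  exact div_le_div_of_nonneg_left (norm_nonneg _) (norm_pos_iff.mpr (hγ m hm)) (hγδ m hm)

lemma norm_sum_sub_sum_mul_div_sub_le [NormedField 𝕜] {γ : ι → 𝕜} {φ : 𝕜} (K : ι → 𝕜)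
    (hγ : ∀ m ∈ s, γ m ≠ 0) (hφ : ∀ m ∈ s, ‖γ m‖ ≤ ‖γ m - φ‖) :
    ‖∑ m ∈ s, K m - ∑ m ∈ s, K m * γ m / (γ m - φ)‖ ≤ ‖φ‖ * ∑ m ∈ s, ‖K m‖ / ‖γ m‖ := by
  have hne : ∀ m ∈ s, γ m ≠ φ := fun m hm =>
    sub_ne_zero.mp <| norm_pos_iff.mp <| (norm_pos_iff.mpr (hγ m hm)).trans_le (hφ m hm)
  rw [sum_sub_sum_mul_div_sub K hne, norm_mul, norm_neg]
  gcongr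
  exact norm_sum_div_le_sum_norm_div_norm K hγ hφ

/-- For `γ m > 0`, the hypothesis `hφ₀` holds for every complex `φ₀` in the closed left
half-plane. -/
theorem abs_phi0_lower_bound_general [NormedField 𝕜] (γ K : ι → 𝕜) (N φ₀ : 𝕜)
    (hγ : ∀ m ∈ s, γ m ≠ 0) (hφ₀ : ∀ m ∈ s, ‖γ m‖ ≤ ‖γ m - φ₀‖)
    (heq : (1 / N) * ∑ m ∈ s, K m * γ m / (γ m - φ₀) = 1) :
    ‖(∑ m ∈ s, K m) / N - 1‖ / ((1 / ‖N‖) * ∑ m ∈ s, ‖K m‖ / ‖γ m‖) ≤ ‖φ₀‖ := by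
  refine div_le_of_le_mul₀ (by positivity) (norm_nonneg _) ?_
  calc ‖(∑ m ∈ s, K m) / N - 1‖
      = ‖(1 / N) * (∑ m ∈ s, K m - ∑ m ∈ s, K m * γ m / (γ m - φ₀))‖ := by
        rw [mul_sub, heq, one_div_mul_eq_div]
    _ = (1 / ‖N‖) * ‖∑ m ∈ s, K m - ∑ m ∈ s, K m * γ m / (γ m - φ₀)‖ := by
        rw [norm_mul, norm_div, norm_one]
    _ ≤ (1 / ‖N‖) * (‖φ₀‖ * ∑ m ∈ s, ‖K m‖ / ‖γ m‖) := by
        gcongr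
        exact norm_sum_sub_sum_mul_div_sub_le K hγ hφ₀
    _ = ‖φ₀‖ * ((1 / ‖N‖) * ∑ m ∈ s, ‖K m‖ / ‖γ m‖) := mul_left_comm _ _ _

end

/-- If `φ₀ < 0` satisfies `(1/N)·Σ_m K_m·γ_m/(γ_m − φ₀) = 1`, then
`|φ₀| ≥ |K/N − 1| / ((1/N)·Σ_m K_m/γ_m)`, where `K = Σ_m K_m`. -/
theorem abs_phi0_lower_bound (Mbar : ℕ) (γ K : Fin Mbar → ℝ) (N : ℝ)
    (hγ : ∀ m, 0 < γ m) (hK : ∀ m, 0 < K m) (hN : 0 < N)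
    (φ₀ : ℝ) (hφ₀ : φ₀ < 0)
    (heq : (1 / N) * ∑ m, K m * γ m / (γ m - φ₀) = 1) :
    |(∑ m, K m) / N - 1| / ((1 / N) * ∑ m, K m / γ m) ≤ |φ₀| := by
  have hle : ∀ m, ‖γ m‖ ≤ ‖γ m - φ₀‖ := fun m =>
    abs_le_abs_of_nonneg (hγ m).le (by linarith)
  simpa only [Real.norm_eq_abs, abs_of_pos hN, abs_of_pos (hK _), abs_of_pos (hγ _)] using
    abs_phi0_lower_bound_general γ K N φ₀ (fun m _ => (hγ m).ne') (fun m _ => hle m) heq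
end

section
/- If φ₀ < 0 satisfies (1/N)·Σ_{m=1}^{M̄} K_m·γ_m/(γ_m − φ₀) = 1, then (1/N)·Σ_{m=1}^{M̄} K_m·(γ_m/(γ_m − φ₀))² = 1 − |φ₀|·(1/N)·Σ_{m=1}^{M̄} K_m·γ_m/(γ_m − φ₀)², and in particular this quantity is strictly less than 1. -/
open scoped BigOperators

section Field

variable {𝕜 : Type*} [Field 𝕜]

theorem div_sub_sq_eq_add {x y : 𝕜} (hxy : x ≠ y) :
    (x / (x - y)) ^ 2 = x / (x - y) + y * (x / (x - y) ^ 2) := by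
  have hsub : x - y ≠ 0 := sub_ne_zero.mpr hxy
  field_simp
  ring

theorem sum_mul_div_sub_sq_eq_add {ι : Type*} {s : Finset ι} {γ : ι → 𝕜} {φ : 𝕜}
    (K : ι → 𝕜) (hγφ : ∀ i ∈ s, γ i ≠ φ) :
    ∑ i ∈ s, K i * (γ i / (γ i - φ)) ^ 2 =
      ∑ i ∈ s, K i * γ i / (γ i - φ) + φ * ∑ i ∈ s, K i * γ i / (γ i - φ) ^ 2 := by
  rw [Finset.mul_sum, ← Finset.sum_add_distrib]
  refine Finset.sum_congr rfl fun i hi => ?_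
  rw [div_sub_sq_eq_add (hγφ i hi)]
  ring

end Field

section LinearOrderedField

variable {𝕜 : Type*} [Field 𝕜] [LinearOrder 𝕜] [IsStrictOrderedRing 𝕜]

-- Indices with `d i = 0` contribute `0` to both sums, since `x / 0 = 0`.
theorem sum_div_sq_pos_of_sum_div_ne_zero {ι : Type*} {s : Finset ι} {a d : ι → 𝕜}
    (ha : ∀ i ∈ s, 0 ≤ a i) (hsum : ∑ i ∈ s, a i / d i ≠ 0) :
    0 < ∑ i ∈ s, a i / d i ^ 2 := by
  obtain ⟨j, hj, hne⟩ := Finset.exists_ne_zero_of_sum_ne_zero hsum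
  obtain ⟨haj, hdj⟩ := div_ne_zero_iff.mp hne
  exact Finset.sum_pos' (fun i hi => div_nonneg (ha i hi) (sq_nonneg (d i)))
    ⟨j, hj, div_pos ((ha j hj).lt_of_ne' haj) (sq_pos_of_ne_zero hdj)⟩

theorem trace_Q_sq_identity_general {ι : Type*} {s : Finset ι} {γ K : ι → 𝕜} {N φ₀ : 𝕜}
    (hγφ : ∀ m ∈ s, γ m ≠ φ₀) (hKγ : ∀ m ∈ s, 0 ≤ K m * γ m) (hN : 0 < N) (hφ₀ : φ₀ < 0)
    (heq : (1 / N) * ∑ m ∈ s, K m * γ m / (γ m - φ₀) = 1) :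
    (1 / N) * ∑ m ∈ s, K m * (γ m / (γ m - φ₀)) ^ 2
      = 1 - |φ₀| * ((1 / N) * ∑ m ∈ s, K m * γ m / (γ m - φ₀) ^ 2) ∧
    (1 / N) * ∑ m ∈ s, K m * (γ m / (γ m - φ₀)) ^ 2 < 1 := by
  have identity : (1 / N) * ∑ m ∈ s, K m * (γ m / (γ m - φ₀)) ^ 2
      = 1 - |φ₀| * ((1 / N) * ∑ m ∈ s, K m * γ m / (γ m - φ₀) ^ 2) := by
    rw [sum_mul_div_sub_sq_eq_add K hγφ, mul_add, heq, abs_of_neg hφ₀]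
    ring
  have sum_ne_zero : ∑ m ∈ s, K m * γ m / (γ m - φ₀) ≠ 0 :=
    right_ne_zero_of_mul_eq_one heq
  have correction_pos : 0 < |φ₀| * ((1 / N) * ∑ m ∈ s, K m * γ m / (γ m - φ₀) ^ 2) :=
    mul_pos (abs_pos.mpr hφ₀.ne)
      (mul_pos (one_div_pos.mpr hN) (sum_div_sq_pos_of_sum_div_ne_zero hKγ sum_ne_zero))
  exact ⟨identity, identity.trans_lt (sub_lt_self 1 correction_pos)⟩

end LinearOrderedField

/-- If `φ₀ < 0` satisfies `(1/N)·Σ_m K_m·γ_m/(γ_m − φ₀) = 1`, then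
`(1/N)·Σ_m K_m·(γ_m/(γ_m − φ₀))² = 1 − |φ₀|·(1/N)·Σ_m K_m·γ_m/(γ_m − φ₀)²`,
and in particular this quantity is strictly less than `1`. -/
theorem trace_Q_sq_identity (Mbar : ℕ) (γ K : Fin Mbar → ℝ) (N : ℝ)
    (hγ : ∀ m, 0 < γ m) (hK : ∀ m, 0 < K m) (hN : 0 < N)
    (φ₀ : ℝ) (hφ₀ : φ₀ < 0)
    (heq : (1 / N) * ∑ m, K m * γ m / (γ m - φ₀) = 1) :
    (1 / N) * ∑ m, K m * (γ m / (γ m - φ₀)) ^ 2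
      = 1 - |φ₀| * ((1 / N) * ∑ m, K m * γ m / (γ m - φ₀) ^ 2) ∧
    (1 / N) * ∑ m, K m * (γ m / (γ m - φ₀)) ^ 2 < 1 := by
  exact trace_Q_sq_identity_general (fun m _ => (hφ₀.trans (hγ m)).ne')
    (fun m _ => (mul_pos (hK m) (hγ m)).le) hN hφ₀ heq
end

section
/- Let W be an L×L real symmetric positive semidefinite matrix with entries satisfying 0 ≤ W_{ij} < 1, and define the L×L matrix G by G_{ij} = −W_{ij} − log(1 − W_{ij}). Then G = Σ_{n≥2} (1/n)·W^{∘n}, where W^{∘n} denotes the n-fold entrywise (Hadamard) product of W with itself, the matrix G − (1/2)·(W ∘ W) is positive semidefinite, and if W is positive definite then G is positive definite. -/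
open scoped BigOperators
open Matrix

/-- Entrywise (Hadamard) `n`-th power of a matrix. -/
def hadamardPow {L : ℕ} (W : Matrix (Fin L) (Fin L) ℝ) (n : ℕ) :
    Matrix (Fin L) (Fin L) ℝ :=
  Matrix.of fun i j => (W i j) ^ n

/-!
A power series with nonnegative coefficients, applied entrywise, preserves positive
semidefiniteness: the Hadamard powers are positive semidefinite by Schur's product theorem, and the
positive semidefinite matrices form a closed convex cone. Removing from `-log (1 - x)` its terms of
degree at most two leaves such a series. It converges at every entry, since the `2 × 2` principal
minors bound all entries by the diagonal ones. Positive definiteness comes from the quadratic term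
alone, whose matrix `(1/2) W ⊙ W` is positive definite by Schur's theorem.
-/

section Closedness

variable {ι R : Type*} [Ring R] [PartialOrder R] [StarRing R]
  [TopologicalSpace R] [IsTopologicalSemiring R] [ContinuousStar R] [OrderClosedTopology R]

theorem isClosed_setOfPred_posSemidef : IsClosed {M : Matrix ι ι R | M.PosSemidef} := by
  have continuous_form (x : ι →₀ R) : Continuous fun M : Matrix ι ι R ↦
      x.sum fun i xi ↦ x.sum fun j xj ↦ star xi * M i j * xj :=
    continuous_finsetSum _ fun i _ ↦ continuous_finsetSum _ fun j _ ↦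
      (continuous_const.mul (continuous_id.matrix_elem i j)).mul continuous_const
  simp only [PosSemidef, Set.ofPred_and, Set.ofPred_forall]
  exact (isClosed_eq continuous_id.matrix_conjTranspose continuous_id).inter
    (isClosed_iInter fun x ↦ isClosed_le continuous_const (continuous_form x))

theorem posSemidef_of_hasSum [AddLeftMono R] {κ : Type*} {A : κ → Matrix ι ι R} {B : Matrix ι ι R}
    (hA : ∀ k, (A k).PosSemidef) (hAB : HasSum A B) : B.PosSemidef :=
  isClosed_setOfPred_posSemidef.mem_of_tendsto hAB <|
    Filter.Eventually.of_forall fun s ↦ posSemidef_sum s fun k _ ↦ hA k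

end Closedness

theorem posSemidef_of_one {ι R : Type*} [Ring R] [PartialOrder R] [StarRing R] [StarOrderedRing R] :
    (of 1 : Matrix ι ι R).PosSemidef := by
  refine ⟨by ext; simp, fun x ↦ ?_⟩
  have form_eq : (x.sum fun i xi ↦ x.sum fun j xj ↦ star xi * (of 1 : Matrix ι ι R) i j * xj) =
      star (x.sum fun _ xi ↦ xi) * x.sum fun _ xi ↦ xi := by
    simp only [Finsupp.sum, of_apply, Pi.one_apply, mul_one, star_sum, Finset.sum_mul_sum]
  exact form_eq ▸ star_mul_self_nonneg _

section RCLike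

open scoped ComplexOrder

variable {ι 𝕜 : Type*} [RCLike 𝕜] {M : Matrix ι ι 𝕜}

theorem posSemidef_map_pow (hM : M.PosSemidef) (n : ℕ) : (M.map (· ^ n)).PosSemidef := by
  induction n with
  | zero =>
    have map_pow_zero : M.map (· ^ 0) = of 1 := by ext; simp
    exact map_pow_zero ▸ posSemidef_of_one
  | succ n ih =>
    have map_pow_succ : M.map (· ^ (n + 1)) = M.map (· ^ n) ⊙ M := by ext; simp [pow_succ]
    exact map_pow_succ ▸ ih.hadamard hM

theorem posSemidef_map_of_hasSum_pow (hM : M.PosSemidef) {a : ℕ → 𝕜} (ha : ∀ n, 0 ≤ a n)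
    {f : 𝕜 → 𝕜} (hf : ∀ i j, HasSum (fun n ↦ a n * M i j ^ n) (f (M i j))) :
    (M.map f).PosSemidef :=
  posSemidef_of_hasSum (fun n ↦ (posSemidef_map_pow hM n).smul (ha n)) <|
    Pi.hasSum.2 fun i ↦ Pi.hasSum.2 fun j ↦ hf i j

theorem norm_apply_sq_le_of_posSemidef (hM : M.PosSemidef) (i j : ι) :
    ‖M i j‖ ^ 2 ≤ ‖M i i‖ * ‖M j j‖ := by
  have minor_nonneg : 0 ≤ M i i * M j j - M i j * M j i := by
    simpa only [det_fin_two, submatrix_apply, cons_val_zero, cons_val_one] using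
      (hM.submatrix ![i, j]).det_nonneg
  have apply_mul_apply : M i j * M j i = (‖M i j‖ ^ 2 : 𝕜) := by
    rw [← hM.isHermitian.apply j i, RCLike.star_def, RCLike.mul_conj]
  rw [apply_mul_apply, ← RCLike.norm_of_nonneg' (hM.diag_nonneg (i := i)),
    ← RCLike.norm_of_nonneg' (hM.diag_nonneg (i := j)), sub_nonneg] at minor_nonneg
  exact_mod_cast minor_nonneg

theorem norm_apply_lt_of_posSemidef (hM : M.PosSemidef) {r : ℝ} (hr : ∀ i, ‖M i i‖ < r) (i j : ι) :
    ‖M i j‖ < r := by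
  have r_nonneg : 0 ≤ r := (norm_nonneg _).trans (hr i).le
  refine lt_of_pow_lt_pow_left₀ 2 r_nonneg ?_
  calc ‖M i j‖ ^ 2 ≤ ‖M i i‖ * ‖M j j‖ := norm_apply_sq_le_of_posSemidef hM i j
    _ < r * r := mul_lt_mul'' (hr i) (hr j) (norm_nonneg _) (norm_nonneg _)
    _ = r ^ 2 := (sq r).symm

end RCLike

section LogTail

/-- The remainder of the Taylor expansion of `-log (1 - x)` at `0` after its terms of degree less
than `k`. The summand of index `0` is `x ^ 0 / 0 = 0`. -/
noncomputable def logTail (k : ℕ) (x : ℝ) : ℝ :=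
  -Real.log (1 - x) - ∑ n ∈ Finset.range k, x ^ n / n

theorem logTail_succ (k : ℕ) (x : ℝ) : logTail (k + 1) x = logTail k x - x ^ k / k := by
  rw [logTail, logTail, Finset.sum_range_succ, sub_add_eq_sub_sub]

theorem logTail_two (x : ℝ) : logTail 2 x = -x - Real.log (1 - x) := by
  simp only [logTail, Finset.sum_range_succ, Finset.sum_range_zero, Nat.cast_zero, Nat.cast_one]
  ring

theorem hasSum_logTail (k : ℕ) {x : ℝ} (hx : |x| < 1) :
    HasSum (fun n : ℕ ↦ if k ≤ n then 1 / (n : ℝ) * x ^ n else 0) (logTail k x) := by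
  have log_series : HasSum (fun n : ℕ ↦ x ^ n / n) (-Real.log (1 - x)) := by
    simpa using (hasSum_nat_add_iff (f := fun n : ℕ ↦ x ^ n / n) 1).1
      (by simpa using Real.hasSum_pow_div_log_of_abs_lt_one hx)
  have shifted_tail := (hasSum_nat_add_iff' k).2 log_series
  rw [← hasSum_nat_add_iff' k, Finset.sum_eq_zero fun n hn ↦
    if_neg (Finset.mem_range.1 hn).not_ge, sub_zero]
  simpa only [logTail, if_pos (Nat.le_add_left k _), one_div_mul_eq_div] using shifted_tail

theorem posSemidef_map_logTail {ι : Type*} {W : Matrix ι ι ℝ} (hW : W.PosSemidef)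
    (hW1 : ∀ i j, |W i j| < 1) (k : ℕ) : (W.map (logTail k)).PosSemidef := by
  refine posSemidef_map_of_hasSum_pow hW (a := fun n ↦ if k ≤ n then 1 / (n : ℝ) else 0)
    (fun n ↦ by positivity) fun i j ↦ ?_
  simpa only [ite_mul, zero_mul] using hasSum_logTail k (hW1 i j)

end LogTail

theorem hadamard_log_series_posdef_general {ι : Type*} {W : Matrix ι ι ℝ} (hW : W.PosSemidef)
    (hdiag : ∀ i, W i i < 1) {G : Matrix ι ι ℝ}
    (hG : ∀ i j, G i j = -W i j - Real.log (1 - W i j)) :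
    (∀ i j, HasSum (fun n : ℕ ↦ if 2 ≤ n then 1 / (n : ℝ) * W i j ^ n else 0) (G i j)) ∧
    (G - (1 / 2 : ℝ) • (W ⊙ W)).PosSemidef ∧
    (W.PosDef → G.PosDef) := by
  have abs_lt_one : ∀ i j, |W i j| < 1 :=
    norm_apply_lt_of_posSemidef hW fun i ↦ (Real.norm_of_nonneg hW.diag_nonneg).trans_lt (hdiag i)
  have G_eq (i j : ι) : G i j = logTail 2 (W i j) := (hG i j).trans (logTail_two _).symm
  have remainder_eq : G - (1 / 2 : ℝ) • (W ⊙ W) = W.map (logTail 3) := by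
    ext i j
    simp [G_eq, logTail_succ 2, sq, div_eq_inv_mul]
  have remainder_posSemidef : (G - (1 / 2 : ℝ) • (W ⊙ W)).PosSemidef :=
    remainder_eq ▸ posSemidef_map_logTail hW abs_lt_one 3
  refine ⟨fun i j ↦ ?_, remainder_posSemidef, fun hpd ↦ ?_⟩
  · exact G_eq i j ▸ hasSum_logTail 2 (abs_lt_one i j)
  · have quadratic_posDef : ((1 / 2 : ℝ) • (W ⊙ W)).PosDef := (hpd.hadamard hpd).smul one_half_pos
    simpa only [add_sub_cancel] using quadratic_posDef.add_posSemidef remainder_posSemidef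

/-- Let `W` be an `L×L` real symmetric positive semidefinite matrix with entries in `[0,1)`,
and let `G` be the matrix with entries `G_{ij} = −W_{ij} − log(1 − W_{ij})`.  Then
`G = Σ_{n ≥ 2} (1/n)·W^{∘n}` (entrywise series of Hadamard powers), the matrix
`G − (1/2)·(W ∘ W)` is positive semidefinite, and if `W` is positive definite then so is `G`. -/
theorem hadamard_log_series_posdef (L : ℕ) (W : Matrix (Fin L) (Fin L) ℝ)
    (hW : W.PosSemidef)
    (hW01 : ∀ i j, 0 ≤ W i j ∧ W i j < 1)
    (G : Matrix (Fin L) (Fin L) ℝ)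
    (hG : ∀ i j, G i j = -W i j - Real.log (1 - W i j)) :
    (∀ i j, G i j = ∑' n : ℕ, if 2 ≤ n then (1 / (n : ℝ)) * hadamardPow W n i j else 0) ∧
    (G - (1 / 2 : ℝ) • (W ⊙ W)).PosSemidef ∧
    (W.PosDef → G.PosDef) := by
  obtain ⟨hasSum_G, h⟩ := hadamard_log_series_posdef_general hW (fun i ↦ (hW01 i i).2) hG
  exact ⟨fun i j ↦ (hasSum_G i j).tsum_eq.symm, h⟩
end

section
/- The following identity holds: ∏_{k≥1, φ_k≠0} (φ_k − φ₀) / ∏_{k=1}^{M̄} (γ_k − φ₀) equals (1/N)·Σ_{m=1}^{M̄} K_m·γ_m/(γ_m − φ₀)² when φ₀ ≠ 0, and equals (N − K)/N when φ₀ = 0. -/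
open scoped BigOperators
open Finset

/-!
Put `a m = K m * γ m / N` and `Φ(X) = ∑ m, a m / (γ m - X)`. The polynomial on the right of the
hypothesis is `(∏ k, (γ k - X)) * (1 - Φ(X))`. At a root `r` of `Φ = 1`, writing `1` as `Φ(r)` and
subtracting termwise pulls out a factor `r - X` explicitly:
`1 - Φ(X) = (r - X) * ∑ m, a m / ((γ m - r) * (γ m - X))`.
Cancelling `φ₀ - X` from the two factorizations and putting `X = φ₀` gives the value at
`φ₀ ≠ 0`. If `φ₀ = 0`, no factor has to be removed and one evaluates at `X = 0`, where
`Φ(0) = (∑ m, K m) / N`.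
-/

theorem prod_erase_eq_div_of_ne_zero {ι G : Type*} [DecidableEq ι] [CommGroupWithZero G]
    {s : Finset ι} {f : ι → G} {m : ι} (hm : m ∈ s) (hfm : f m ≠ 0) :
    ∏ k ∈ s.erase m, f k = (∏ k ∈ s, f k) / f m :=
  eq_div_of_mul_eq hfm (prod_erase_mul s f hm)

theorem prod_sub_ne_zero {ι R : Type*} [CommRing R] [IsDomain R] {s : Finset ι} {γ : ι → R} {x : R}
    (hx : ∀ m ∈ s, γ m ≠ x) : ∏ m ∈ s, (γ m - x) ≠ 0 :=
  prod_ne_zero_iff.mpr fun m hm => sub_ne_zero.mpr (hx m hm)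

section SecularPolynomial

open Polynomial

variable {ι κ R F : Type*} [DecidableEq ι] [CommRing R] [Field F]

/-- The numerator of the secular function `1 - ∑ m ∈ s, a m / (γ m - X)` over the common
denominator `∏ k ∈ s, (γ k - X)`, in a division-free form; its roots are the nonzero `φ k` of the
theorem. The factors are `γ k - X` rather than `X - γ k`, so the leading coefficient is
`(-1) ^ #s`. -/
noncomputable def secularPolynomial (s : Finset ι) (γ a : ι → R) : R[X] :=
  ∏ k ∈ s, (C (γ k) - X) - ∑ m ∈ s, C (a m) * ∏ k ∈ s.erase m, (C (γ k) - X)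

theorem eval_secularPolynomial (s : Finset ι) (γ a : ι → R) (x : R) :
    (secularPolynomial s γ a).eval x =
      ∏ k ∈ s, (γ k - x) - ∑ m ∈ s, a m * ∏ k ∈ s.erase m, (γ k - x) := by
  simp [secularPolynomial, eval_prod, eval_finsetSum]

variable {s : Finset ι} {γ a : ι → F} {r x : F}

theorem eval_secularPolynomial_eq_mul (hx : ∀ m ∈ s, γ m ≠ x) :
    (secularPolynomial s γ a).eval x =
      (∏ k ∈ s, (γ k - x)) * (1 - ∑ m ∈ s, a m / (γ m - x)) := by
  rw [eval_secularPolynomial, mul_sub, mul_one, mul_sum]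
  congr 1
  refine sum_congr rfl fun m hm => ?_
  rw [prod_erase_eq_div_of_ne_zero hm (sub_ne_zero.mpr (hx m hm)), mul_div_left_comm]

theorem isRoot_secularPolynomial_iff (hx : ∀ m ∈ s, γ m ≠ x) :
    (secularPolynomial s γ a).IsRoot x ↔ ∑ m ∈ s, a m / (γ m - x) = 1 := by
  rw [IsRoot.def, eval_secularPolynomial_eq_mul hx, mul_eq_zero_iff_left (prod_sub_ne_zero hx),
    sub_eq_zero, eq_comm]

theorem secularPolynomial_eq_mul_of_isRoot (hr : ∀ m ∈ s, γ m ≠ r)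
    (hroot : (secularPolynomial s γ a).IsRoot r) :
    secularPolynomial s γ a =
      (C r - X) * ∑ m ∈ s, C (a m / (γ m - r)) * ∏ k ∈ s.erase m, (C (γ k) - X) := by
  have hone : ∑ m ∈ s, C (a m / (γ m - r)) = 1 := by
    rw [← map_sum, (isRoot_secularPolynomial_iff hr).mp hroot, C_1]
  rw [secularPolynomial, ← one_mul (∏ k ∈ s, _), ← hone, sum_mul, ← sum_sub_distrib, mul_sum]
  refine sum_congr rfl fun m hm => ?_
  have ha : C (a m) = C (a m / (γ m - r)) * (C (γ m) - C r) := by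
    rw [← C_sub, ← C_mul, div_mul_cancel₀ _ (sub_ne_zero.mpr (hr m hm))]
  rw [← mul_prod_erase s _ hm, ha]
  ring

theorem eval_div_prod_of_secularPolynomial_eq_mul {q : F[X]} (hr : ∀ m ∈ s, γ m ≠ r)
    (hq : (C r - X) * q = secularPolynomial s γ a) :
    q.eval r / ∏ k ∈ s, (γ k - r) = ∑ m ∈ s, a m / (γ m - r) ^ 2 := by
  have hroot : (secularPolynomial s γ a).IsRoot r := by simp [← hq]
  have hne : C r - X ≠ 0 := sub_ne_zero.mpr (X_ne_C r).symm
  have hquot : q = ∑ m ∈ s, C (a m / (γ m - r)) * ∏ k ∈ s.erase m, (C (γ k) - X) :=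
    mul_left_cancel₀ hne (hq.trans (secularPolynomial_eq_mul_of_isRoot hr hroot))
  have heval : q.eval r = ∑ m ∈ s, a m / (γ m - r) * ∏ k ∈ s.erase m, (γ k - r) := by
    simp [hquot, eval_prod, eval_finsetSum]
  rw [heval, div_eq_iff (prod_sub_ne_zero hr), sum_mul]
  refine sum_congr rfl fun m hm => ?_
  rw [prod_erase_eq_div_of_ne_zero hm (sub_ne_zero.mpr (hr m hm)), div_mul_div_comm, ← sq,
    div_mul_eq_mul_div]

theorem ratio_of_root_products_general [Fintype ι] [Fintype κ] [DecidableEq κ] [DecidableEq F]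
    {γ K : ι → F} {N : F} {φ : κ → F} {i : κ} (hN : N ≠ 0) (hγ : ∀ m, γ m ≠ φ i)
    (hφ : ∏ k with φ k ≠ 0, (C (φ k) - X) =
      secularPolynomial univ γ fun m => K m * γ m / N) :
    (φ i ≠ 0 →
      (∏ k with k ≠ i ∧ φ k ≠ 0, (φ k - φ i)) / ∏ k, (γ k - φ i) =
        (1 / N) * ∑ m, K m * γ m / (γ m - φ i) ^ 2) ∧
    (φ i = 0 →
      (∏ k with k ≠ i ∧ φ k ≠ 0, (φ k - φ i)) / ∏ k, (γ k - φ i) = (N - ∑ m, K m) / N) := by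
  have herase : ({k | k ≠ i ∧ φ k ≠ 0} : Finset κ) = ({k | φ k ≠ 0} : Finset κ).erase i := by
    ext; simp
  have hγ' : ∀ m ∈ univ, γ m ≠ φ i := fun m _ => hγ m
  rw [herase]
  constructor <;> intro hi
  · have hfactor : (C (φ i) - X) * ∏ k ∈ ({k | φ k ≠ 0} : Finset κ).erase i, (C (φ k) - X) =
        secularPolynomial univ γ fun m => K m * γ m / N := by
      rw [mul_prod_erase _ (fun k => C (φ k) - X) (by simpa using hi), hφ]
    have hratio := eval_div_prod_of_secularPolynomial_eq_mul hγ' hfactor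
    simp only [eval_prod, eval_sub, eval_C, eval_X] at hratio
    rw [hratio, mul_sum]
    exact sum_congr rfl fun m _ => by ring
  · have heval := congrArg (eval (φ i)) hφ
    simp only [eval_prod, eval_sub, eval_C, eval_X] at heval
    have hsecular : ∑ m, K m * γ m / N / (γ m - φ i) = (∑ m, K m) / N := by
      rw [sum_div]
      refine sum_congr rfl fun m _ => ?_
      rw [hi, sub_zero, div_right_comm, mul_div_cancel_right₀ _ (by simpa [hi] using hγ m)]
    rw [erase_eq_of_notMem (by simpa using hi), heval, eval_secularPolynomial_eq_mul hγ', hsecular,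
      mul_div_cancel_left₀ _ (prod_sub_ne_zero hγ'), sub_div, div_self hN]

end SecularPolynomial

/-- Lemma 2 identity (eq:identyphis): with `φ₀ ≤ φ₁ ≤ … ≤ φ_{M̄}` the `M̄+1` real roots of
`φ·(1 − Φ(φ)) = 0`, expressed through the polynomial identity
`∏_{k : φ_k ≠ 0} (φ_k − X) = ∏_k (γ_k − X) − (1/N)·Σ_m K_m γ_m ∏_{k≠m} (γ_k − X)`,
one has `∏_{k ≥ 1, φ_k ≠ 0} (φ_k − φ₀) / ∏_k (γ_k − φ₀)
  = (1/N)·Σ_m K_m γ_m/(γ_m − φ₀)²` when `φ₀ ≠ 0`, and `= (N − K)/N` when `φ₀ = 0`. -/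
theorem ratio_of_root_products (Mbar : ℕ) (γ K : Fin Mbar → ℝ) (N : ℝ)
    (hγpos : ∀ m, 0 < γ m) (hγmono : StrictMono γ) (hK : ∀ m, 0 < K m)
    (hN : 0 < N) (hKN : ∑ m, K m ≠ N)
    (φ : Fin (Mbar + 1) → ℝ) (hφmono : Monotone φ) (hφ₀ : φ 0 ≤ 0)
    (hpoly : ∀ X : ℝ,
      ∏ k ∈ univ.filter (fun k => φ k ≠ 0), (φ k - X) =
        ∏ k, (γ k - X) -
          (1 / N) * ∑ m, K m * γ m * ∏ k ∈ univ.erase m, (γ k - X)) :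
    (φ 0 ≠ 0 →
      (∏ k ∈ univ.filter (fun k => k ≠ 0 ∧ φ k ≠ 0), (φ k - φ 0)) /
          ∏ k, (γ k - φ 0)
        = (1 / N) * ∑ m, K m * γ m / (γ m - φ 0) ^ 2) ∧
    (φ 0 = 0 →
      (∏ k ∈ univ.filter (fun k => k ≠ 0 ∧ φ k ≠ 0), (φ k - φ 0)) /
          ∏ k, (γ k - φ 0)
        = (N - ∑ m, K m) / N) := by
  refine ratio_of_root_products_general hN.ne'
    (fun m => (hφ₀.trans_lt (hγpos m)).ne') (Polynomial.funext fun x => ?_)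
  simpa [eval_secularPolynomial, Polynomial.eval_prod, mul_sum, div_mul_eq_mul_div,
    inv_mul_eq_div] using hpoly x
end

section
/- Let R be an M×M Hermitian positive definite matrix and let P₁^⊥,…,P_L^⊥ be M×M orthogonal projection matrices, and let N > 0. Define the L×L matrices Γ_C, {Γ_C}_{ℓ,m} = (1/N)·tr[P_ℓ^⊥·R·P_m^⊥·R], and W_P, {W_P}_{ℓ,m} = (1/N)·tr[P_ℓ^⊥·P_m^⊥]. Then Γ_C is Hermitian positive semidefinite and its smallest eigenvalue satisfies λ_min(Γ_C) ≥ λ_min(R)²·λ_min(W_P), where λ_min denotes the smallest eigenvalue. -/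
open scoped BigOperators
open Matrix
open scoped ComplexOrder

/-!
In the Loewner order `λ_min(A)` is the largest real `c` with `c • 1 ≤ A`. Since the trace of a
product of two positive semidefinite matrices is nonnegative, the quadratic form
`X ↦ tr (Xᴴ A X B)` increases with `A` and `B` as long as both stay positive semidefinite. Hence so
does the Gram matrix of a family `P` for this form, and replacing `A` and `B` by the smaller
matrices `λ_min(A) • 1` and `λ_min(B) • 1` leaves `λ_min(A) * λ_min(B)` times the unweighted Gram
matrix as a lower bound.
-/

section Loewner

open scoped MatrixOrder

variable {𝕜 m n ι : Type*} [RCLike 𝕜] [Fintype m] [Fintype n]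

lemma smul_one_le_iff_le_iInf_eigenvalues [DecidableEq n] [Nonempty n] {A : Matrix n n 𝕜}
    (hA : A.IsHermitian) {c : ℝ} :
    c • (1 : Matrix n n 𝕜) ≤ A ↔ c ≤ ⨅ i, hA.eigenvalues i := by
  rw [← Algebra.algebraMap_eq_smul_one, algebraMap_le_iff_le_spectrum hA.isSelfAdjoint,
    hA.spectrum_real_eq_range_eigenvalues, Set.forall_mem_range,
    le_ciInf_iff (Set.finite_range _).bddBelow]

lemma trace_mul_nonneg {A B : Matrix n n 𝕜} (hA : 0 ≤ A) (hB : 0 ≤ B) : 0 ≤ (A * B).trace := by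
  classical
  obtain ⟨C, rfl⟩ := CStarAlgebra.nonneg_iff_eq_star_mul_self.1 hA
  rw [star_eq_conjTranspose, trace_mul_cycle, trace_mul_cycle]
  exact (hB.posSemidef.mul_mul_conjTranspose_same C).trace_nonneg

lemma trace_mul_le_trace_mul_left {A B C : Matrix n n 𝕜} (hA : 0 ≤ A) (hBC : B ≤ C) :
    (A * B).trace ≤ (A * C).trace := by
  rw [← sub_nonneg, ← trace_sub, ← Matrix.mul_sub]
  exact trace_mul_nonneg hA (sub_nonneg.2 hBC)

lemma trace_conjTranspose_mul_mul_mul_mono {A A' : Matrix m m 𝕜} {B B' : Matrix n n 𝕜}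
    (hA : 0 ≤ A) (hAA' : A ≤ A') (hB' : 0 ≤ B') (hBB' : B ≤ B') (X : Matrix m n 𝕜) :
    (Xᴴ * A * X * B).trace ≤ (Xᴴ * A' * X * B').trace := by
  have trace_cycle (D : Matrix m m 𝕜) : (Xᴴ * D * X * B').trace = (X * B' * Xᴴ * D).trace := by
    rw [trace_mul_cycle, trace_mul_cycle, ← Matrix.mul_assoc]
  calc (Xᴴ * A * X * B).trace
      ≤ (Xᴴ * A * X * B').trace :=
        trace_mul_le_trace_mul_left (hA.posSemidef.conjTranspose_mul_mul_same X).nonneg hBB'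
    _ = (X * B' * Xᴴ * A).trace := trace_cycle A
    _ ≤ (X * B' * Xᴴ * A').trace :=
        trace_mul_le_trace_mul_left (hB'.posSemidef.mul_mul_conjTranspose_same X).nonneg hAA'
    _ = (Xᴴ * A' * X * B').trace := (trace_cycle A').symm

/-- The Gram matrix of a family `P` of matrices for the real symmetric form
`(X, Y) ↦ re (tr (Xᴴ A Y B))`, where `A` and `B` are Hermitian weights. It is the real part of
`Wᴴ (Bᵀ ⊗ A) W`, where the columns of `W` are the vectors `vec (P l)`. -/
def weightedGram (A : Matrix m m 𝕜) (B : Matrix n n 𝕜) (P : ι → Matrix m n 𝕜) : Matrix ι ι ℝ :=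
  of fun l k => RCLike.re ((P l)ᴴ * A * P k * B).trace

variable {A A' : Matrix m m 𝕜} {B B' : Matrix n n 𝕜}

lemma isHermitian_weightedGram (hA : A.IsHermitian) (hB : B.IsHermitian) (P : ι → Matrix m n 𝕜) :
    (weightedGram A B P).IsHermitian := by
  ext l k
  simp only [weightedGram, conjTranspose_apply, of_apply, star_trivial]
  rw [← RCLike.conj_re, ← RCLike.star_def, ← trace_conjTranspose]
  simp only [conjTranspose_mul, conjTranspose_conjTranspose, hA.eq, hB.eq]
  rw [trace_mul_comm, ← Matrix.mul_assoc]

lemma dotProduct_weightedGram_mulVec [Fintype ι] (A : Matrix m m 𝕜) (B : Matrix n n 𝕜)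
    (P : ι → Matrix m n 𝕜) (x : ι → ℝ) :
    x ⬝ᵥ weightedGram A B P *ᵥ x =
      RCLike.re ((∑ l, x l • P l)ᴴ * A * (∑ l, x l • P l) * B).trace := by
  simp only [weightedGram, dotProduct, mulVec, of_apply, conjTranspose_sum, conjTranspose_smul,
    star_trivial, Matrix.sum_mul, Matrix.mul_sum, Matrix.smul_mul, Matrix.mul_smul, trace_sum,
    trace_smul, map_sum, RCLike.smul_re, Finset.mul_sum]
  rw [Finset.sum_comm]
  exact Finset.sum_congr rfl fun _ _ => Finset.sum_congr rfl fun _ _ => by ring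

lemma weightedGram_smul_smul (a b : ℝ) (A : Matrix m m 𝕜) (B : Matrix n n 𝕜)
    (P : ι → Matrix m n 𝕜) :
    weightedGram (a • A) (b • B) P = (a * b) • weightedGram A B P := by
  ext l k
  simp only [weightedGram, Matrix.mul_smul, Matrix.smul_mul, trace_smul, RCLike.smul_re,
    of_apply, Matrix.smul_apply, smul_eq_mul]
  ring

lemma weightedGram_mono [Finite ι] (hA : 0 ≤ A) (hAA' : A ≤ A') (hB : 0 ≤ B) (hBB' : B ≤ B')
    (P : ι → Matrix m n 𝕜) : weightedGram A B P ≤ weightedGram A' B' P := by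
  have := Fintype.ofFinite ι
  have hA' : 0 ≤ A' := hA.trans hAA'
  have hB' : 0 ≤ B' := hB.trans hBB'
  refine le_iff.2 (.of_dotProduct_mulVec_nonneg ?_ fun x => ?_)
  · exact (isHermitian_weightedGram hA'.posSemidef.1 hB'.posSemidef.1 P).sub
      (isHermitian_weightedGram hA.posSemidef.1 hB.posSemidef.1 P)
  · rw [star_trivial, sub_mulVec, dotProduct_sub, sub_nonneg, dotProduct_weightedGram_mulVec,
      dotProduct_weightedGram_mulVec]
    exact RCLike.re_le_re (trace_conjTranspose_mul_mul_mul_mono hA hAA' hB' hBB' _)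

lemma posSemidef_weightedGram [Finite ι] (hA : 0 ≤ A) (hB : 0 ≤ B) (P : ι → Matrix m n 𝕜) :
    (weightedGram A B P).PosSemidef := by
  have weightedGram_zero : weightedGram (0 : Matrix m m 𝕜) (0 : Matrix n n 𝕜) P = 0 := by
    simpa only [zero_smul, mul_zero] using
      weightedGram_smul_smul 0 0 (0 : Matrix m m 𝕜) (0 : Matrix n n 𝕜) P
  rw [← nonneg_iff_posSemidef, ← weightedGram_zero]
  exact weightedGram_mono le_rfl hA le_rfl hB P

lemma smul_weightedGram_one_le [Finite ι] [DecidableEq m] [DecidableEq n] {a b : ℝ}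
    (ha : 0 ≤ a) (haA : a • 1 ≤ A) (hb : 0 ≤ b) (hbB : b • 1 ≤ B) (P : ι → Matrix m n 𝕜) :
    (a * b) • weightedGram (1 : Matrix m m 𝕜) (1 : Matrix n n 𝕜) P ≤ weightedGram A B P := by
  have hm : 0 ≤ a • (1 : Matrix m m 𝕜) := smul_nonneg ha zero_le_one
  have hn : 0 ≤ b • (1 : Matrix n n 𝕜) := smul_nonneg hb zero_le_one
  rw [← weightedGram_smul_smul]
  exact weightedGram_mono hm haA hn hbB P

theorem GammaC_posdef_lower_bound_general [Fintype ι] [DecidableEq m] [DecidableEq n]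
    [DecidableEq ι] [Nonempty m] [Nonempty n] [Nonempty ι]
    (hA : A.PosSemidef) (hB : B.PosSemidef) (P : ι → Matrix m n 𝕜) {N : ℝ} (hN : 0 < N)
    {Γ W : Matrix ι ι ℝ}
    (hΓ : ∀ l k, Γ l k = (1 / N) * RCLike.re ((P l)ᴴ * A * P k * B).trace)
    (hW : ∀ l k, W l k = (1 / N) * RCLike.re ((P l)ᴴ * P k).trace) :
    Γ.PosSemidef ∧ ∀ (hΓh : Γ.IsHermitian) (hWh : W.IsHermitian),
      (⨅ i, hA.1.eigenvalues i) * (⨅ i, hB.1.eigenvalues i) * ⨅ i, hWh.eigenvalues i ≤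
        ⨅ i, hΓh.eigenvalues i := by
  have hN' : 0 ≤ 1 / N := (one_div_pos.2 hN).le
  obtain rfl : Γ = (1 / N) • weightedGram A B P := Matrix.ext hΓ
  have hW' : W = (1 / N) • weightedGram (1 : Matrix m m 𝕜) (1 : Matrix n n 𝕜) P :=
    Matrix.ext fun l k => by
      simp only [hW, weightedGram, Matrix.mul_one, Matrix.smul_apply, of_apply, smul_eq_mul]
  refine ⟨(posSemidef_weightedGram hA.nonneg hB.nonneg P).smul hN', fun hΓh hWh => ?_⟩
  set a := ⨅ i, hA.1.eigenvalues i
  set b := ⨅ i, hB.1.eigenvalues i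
  set w := ⨅ i, hWh.eigenvalues i
  have ha : 0 ≤ a := le_ciInf hA.eigenvalues_nonneg
  have hb : 0 ≤ b := le_ciInf hB.eigenvalues_nonneg
  have haA : a • 1 ≤ A := (smul_one_le_iff_le_iInf_eigenvalues hA.1).2 le_rfl
  have hbB : b • 1 ≤ B := (smul_one_le_iff_le_iInf_eigenvalues hB.1).2 le_rfl
  have hwW : w • 1 ≤ W := (smul_one_le_iff_le_iInf_eigenvalues hWh).2 le_rfl
  refine (smul_one_le_iff_le_iInf_eigenvalues hΓh).1 ?_
  calc (a * b * w) • (1 : Matrix ι ι ℝ)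
      = (a * b) • w • (1 : Matrix ι ι ℝ) := mul_smul _ _ _
    _ ≤ (a * b) • W := smul_le_smul_of_nonneg_left hwW (mul_nonneg ha hb)
    _ = (1 / N) • (a * b) • weightedGram (1 : Matrix m m 𝕜) (1 : Matrix n n 𝕜) P := by
        rw [hW', smul_comm]
    _ ≤ (1 / N) • weightedGram A B P :=
        smul_le_smul_of_nonneg_left (smul_weightedGram_one_le ha haA hb hbB P) hN'

end Loewner

/-- The asymptotic CML covariance matrix `Γ_C`, with entries
`(1/N)·tr[P_ℓ^⊥ R P_m^⊥ R]`, is positive semidefinite and its smallest eigenvalue is at least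
`λ_min(R)²·λ_min(W_P)`, where `{W_P}_{ℓ,m} = (1/N)·tr[P_ℓ^⊥ P_m^⊥]`. -/
theorem GammaC_posdef_lower_bound (Mdim L : ℕ) (hM : 0 < Mdim) (hL : 0 < L)
    (R : Matrix (Fin Mdim) (Fin Mdim) ℂ) (hR : R.PosDef)
    (P : Fin L → Matrix (Fin Mdim) (Fin Mdim) ℂ)
    (hPproj : ∀ ℓ, (P ℓ).IsHermitian ∧ P ℓ * P ℓ = P ℓ)
    (N : ℝ) (hN : 0 < N)
    (ΓC WP : Matrix (Fin L) (Fin L) ℝ)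
    (hΓC : ∀ ℓ m, ΓC ℓ m = (1 / N) * (Matrix.trace (P ℓ * R * P m * R)).re)
    (hWP : ∀ ℓ m, WP ℓ m = (1 / N) * (Matrix.trace (P ℓ * P m)).re) :
    ΓC.PosSemidef ∧
    ∀ (hΓh : ΓC.IsHermitian) (hWh : WP.IsHermitian),
      (⨅ i, hR.1.eigenvalues i) ^ 2 * ⨅ i, hWh.eigenvalues i ≤ ⨅ i, hΓh.eigenvalues i := by
  have := Fin.pos_iff_nonempty.1 hM
  have := Fin.pos_iff_nonempty.1 hL
  simpa only [sq] using GammaC_posdef_lower_bound_general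
    (Γ := ΓC) (W := WP) hR.posSemidef hR.posSemidef P hN
    (by simpa only [(hPproj _).1.eq, RCLike.re_eq_complex_re] using hΓC)
    (by simpa only [(hPproj _).1.eq, RCLike.re_eq_complex_re] using hWP)
end

section
/- Let M > K ≥ 1 be integers, T a real number, and α₁ ≤ α₂ ≤ … ≤ α_K nonnegative reals with Σ_{i=1}^{K} α_i ≤ T. For 1 ≤ k ≤ K define σ_k² = (T − Σ_{i=K−k+1}^{K} α_i)/(M − k). If for some m ∈ {1,…,K} the inequality α_{K−m+1} > σ_m² holds, then α_{K−k+1} > σ_k² holds for every integer k with 1 ≤ k ≤ m. -/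
open scoped BigOperators
open Finset

/-!
Discarding the components in `t \ s` moves `∑ x ∈ t \ s, f x` from the estimated part back into the
noise part, which gains as many dimensions. Since every such `f x` is at most the new threshold
`a`, the enlarged noise part still averages to less than `a`.
-/

section NoisePower

variable {ι 𝕜 : Type*} [Field 𝕜]

/-- The noise-power estimate: the part of the total power `T` not carried by the components in `s`,
averaged over the remaining `M - #s` dimensions. The paper's `σ_k²` is the case where `s` consists
of the `k` largest eigenvalues. The total dimension `M` is an arbitrary scalar, and the value is the
junk value `0` when `M = #s`. -/
def noisePower (M T : 𝕜) (f : ι → 𝕜) (s : Finset ι) : 𝕜 :=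
  (T - ∑ x ∈ s, f x) / (M - #s)

theorem noisePower_Ici_sub {K k : ℕ} (hlt : K - k < K) (hk : k ≤ K) (M T : 𝕜) (α : Fin K → 𝕜) :
    noisePower M T α (Ici ⟨K - k, hlt⟩) =
      (T - ∑ i ∈ univ.filter (fun i : Fin K => K - k ≤ (i : ℕ)), α i) / (M - k) := by
  have hfilter : univ.filter (fun i : Fin K => K - k ≤ (i : ℕ)) = Ici ⟨K - k, hlt⟩ := by
    ext i
    simp [Fin.le_def]
  rw [noisePower, hfilter, Fin.card_Ici, Nat.sub_sub_self hk]

variable [LinearOrder 𝕜] [IsStrictOrderedRing 𝕜] {M T : 𝕜}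

theorem noisePower_lt_iff {f : ι → 𝕜} {s : Finset ι} {a : 𝕜} (hM : (#s : 𝕜) < M) :
    noisePower M T f s < a ↔ T - ∑ x ∈ s, f x < a * (M - #s) :=
  div_lt_iff₀ (sub_pos.2 hM)

theorem noisePower_lt_of_subset {f : ι → 𝕜} {s t : Finset ι} {a : 𝕜} (hst : s ⊆ t)
    (hM : (#t : 𝕜) < M) (hf : ∀ x ∈ t, x ∉ s → f x ≤ a) (h : noisePower M T f t < a) :
    noisePower M T f s < a := by
  classical
  have hcard : (#(t \ s) : 𝕜) + #s = #t := mod_cast card_sdiff_add_card_eq_card hst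
  have hM' : (#s : 𝕜) < M := lt_of_le_of_lt (mod_cast card_le_card hst) hM
  have hdiff : ∑ x ∈ t \ s, f x ≤ #(t \ s) * a := by
    rw [← nsmul_eq_mul]
    exact sum_le_card_nsmul _ _ _ fun x hx => hf x (mem_sdiff.1 hx).1 (mem_sdiff.1 hx).2
  rw [noisePower_lt_iff hM] at h
  rw [noisePower_lt_iff hM']
  calc T - ∑ x ∈ s, f x = (T - ∑ x ∈ t, f x) + ∑ x ∈ t \ s, f x := by
        rw [← sum_sdiff hst]; ring
    _ < a * (M - #t) + #(t \ s) * a := add_lt_add_of_lt_of_le h hdiff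
    _ = a * (M - #s) := by rw [← hcard]; ring

theorem eigenvalue_threshold_monotone_general [LinearOrder ι] [LocallyFiniteOrderTop ι]
    {α : ι → 𝕜} (hα : Monotone α) {i j : ι} (hij : i ≤ j) (hM : (#(Ici i) : 𝕜) < M)
    (h : noisePower M T α (Ici i) < α i) : noisePower M T α (Ici j) < α j :=
  noisePower_lt_of_subset (Ici_subset_Ici.2 hij) hM
    (fun _ _ hx => hα (not_le.1 (mt mem_Ici.2 hx)).le) (h.trans_le (hα hij))

end NoisePower

/-- If the `m` largest of the ordered values `α₁ ≤ … ≤ α_K` all exceed the noise-power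
estimate `σ_m² = (T − Σ_{i=K−m+1}^{K} α_i)/(M − m)` — equivalently `α_{K−m+1} > σ_m²` —
then the same holds for every index `k` with `1 ≤ k ≤ m`. -/
theorem eigenvalue_threshold_monotone (M K : ℕ) (hK : 0 < K) (hKM : K < M)
    (T : ℝ) (α : Fin K → ℝ) (hmono : Monotone α) (hnonneg : ∀ i, 0 ≤ α i)
    (hsum : ∑ i, α i ≤ T)
    (σsq : ℕ → ℝ)
    (hσ : ∀ k, σsq k =
      (T - ∑ i ∈ univ.filter (fun i : Fin K => K - k ≤ (i : ℕ)), α i) / ((M : ℝ) - k))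
    (m : ℕ) (hm : 0 < m) (hmK : m ≤ K)
    (h : σsq m < α ⟨K - m, Nat.sub_lt hK hm⟩) :
    ∀ k : ℕ, (hk : 0 < k) → k ≤ m → σsq k < α ⟨K - k, Nat.sub_lt hK hk⟩ := by
  rw [hσ, ← noisePower_Ici_sub (Nat.sub_lt hK hm) hmK] at h
  have hM : (#(Ici (⟨K - m, Nat.sub_lt hK hm⟩ : Fin K)) : ℝ) < M := by
    rw [Fin.card_Ici, Nat.sub_sub_self hmK]
    exact_mod_cast hmK.trans_lt hKM
  intro k hk hkm
  rw [hσ, ← noisePower_Ici_sub (Nat.sub_lt hK hk) (hkm.trans hmK)]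
  exact eigenvalue_threshold_monotone_general hmono (Nat.sub_le_sub_left hkm K) hM h
end
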